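/- arXiv:2604.21703 — 3 statements merged into one kernel-verified Lean document; each statement's English description precedes it below -/
import Mathlib

section
/- Let F be a finite field of odd cardinality q, V a finite-dimensional F-vector space, Q a nondegenerate symmetric bilinear form on V, ψ : F → ℂ a nontrivial additive character, and a ∈ F a nonzero element. Then γ_ψ(V, aQ) = γ_ψ(V, Q) · χ(a)^{dim V}, where aQ is the bilinear form (x,y) ↦ a·Q(x,y) and χ is the quadratic character of F. -/
open Finset

/-- The Weil index `γ_ψ(V,Q) = q^{-dim V/2} ∑_{x ∈ V} ψ(Q(x,x)/2)`. -/
noncomputable def weilIndex {F V : Type*} [Field F] [Fintype F]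
    [AddCommGroup V] [Module F V] [Fintype V]
    (ψ : AddChar F ℂ) (Q : LinearMap.BilinForm F V) : ℂ :=
  ((Real.sqrt (Fintype.card F) : ℂ))⁻¹ ^ Module.finrank F V * ∑ x : V, ψ (Q x x / 2)

/-!
A finite-dimensional quadratic form over a field of odd characteristic is a diagonal form
`∑ i, w i * t i ^ 2`, so its exponential sum is a product of one-variable sums
`∑ t, ψ (w i * t ^ 2)`. If `w i ≠ 0`, counting square roots with the quadratic character `χ` shows
that this factor is `χ (w i)` times the Gauss sum of `χ`, so scaling the form by `a` multiplies it
by `χ a`. The factors with `w i = 0` do not change, and the number of the others is the rank.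
-/

section OneVariable

variable {F R : Type*} [Field F] [Fintype F] [DecidableEq F] [CommRing R] [IsDomain R]

theorem sum_addChar_sq_eq_gaussSum (hF : ringChar F ≠ 2) {ψ : AddChar F R} (hψ : ψ ≠ 1) :
    ∑ t, ψ (t ^ 2) = gaussSum ((quadraticChar F).ringHomComp (Int.castRingHom R)) ψ := by
  have card_sqrts (y : F) : (#{t : F | t ^ 2 = y} : R) = (quadraticChar F y : R) + 1 := by
    have h := congrArg (Int.cast : ℤ → R) (quadraticChar_card_sqrts hF y)
    simpa only [Set.toFinset_ofPred, Int.cast_natCast, Int.cast_add, Int.cast_one] using h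
  calc ∑ t, ψ (t ^ 2)
      = ∑ y, (#{t : F | t ^ 2 = y} : R) * ψ y := by
        simp only [← sum_fiberwise' univ (fun t : F ↦ t ^ 2) ψ, sum_const, nsmul_eq_mul]
    _ = ∑ y, (quadraticChar F y : R) * ψ y + ∑ y, ψ y := by
        simp only [card_sqrts, add_mul, one_mul, sum_add_distrib]
    _ = gaussSum ((quadraticChar F).ringHomComp (Int.castRingHom R)) ψ := by
        rw [AddChar.sum_eq_zero_of_ne_one hψ, add_zero]
        rfl

theorem sum_addChar_mul_sq_eq_gaussSum (hF : ringChar F ≠ 2) {ψ : AddChar F R} (hψ : ψ ≠ 1)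
    {c : F} (hc : c ≠ 0) :
    ∑ t, ψ (c * t ^ 2) =
      quadraticChar F c * gaussSum ((quadraticChar F).ringHomComp (Int.castRingHom R)) ψ := by
  set χ := (quadraticChar F).ringHomComp (Int.castRingHom R)
  have hχ : χ⁻¹ = χ := ((quadraticChar_isQuadratic F).comp _).inv
  calc ∑ t, ψ (c * t ^ 2)
      = gaussSum χ (ψ.mulShift c) :=
        sum_addChar_sq_eq_gaussSum hF (AddChar.IsPrimitive.of_ne_one hψ hc)
    _ = χ c * gaussSum χ ψ := by
        simpa only [hχ, Units.val_mk0] using gaussSum_mulShift_eq χ ψ (Units.mk0 c hc)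

theorem sum_addChar_mul_mul_sq (hF : ringChar F ≠ 2) {ψ : AddChar F R} (hψ : ψ ≠ 1)
    {a : F} (ha : a ≠ 0) (c : F) :
    ∑ t, ψ (a * c * t ^ 2) =
      (∑ t, ψ (c * t ^ 2)) * if c ≠ 0 then (quadraticChar F a : R) else 1 := by
  split_ifs with hc
  · rw [sum_addChar_mul_sq_eq_gaussSum hF hψ (mul_ne_zero ha hc),
      sum_addChar_mul_sq_eq_gaussSum hF hψ hc, map_mul, Int.cast_mul]
    ring
  · simp only [not_not.mp hc, mul_zero, mul_one]

end OneVariable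

theorem finrank_quotient_radical_of_equivalent_weightedSumSquares {F V ι : Type*} [Field F]
    [NeZero (2 : F)] [DecidableEq F] [AddCommGroup V] [Module F V] [Fintype ι]
    {Q : QuadraticForm F V} {w : ι → F}
    (h : Q.Equivalent (QuadraticMap.weightedSumSquares F w)) :
    Module.finrank F (V ⧸ Q.radical) = #{i | w i ≠ 0} := by
  have ⟨e⟩ := h
  have : FiniteDimensional F V := e.toLinearEquiv.symm.finiteDimensional
  have h_radical : Module.finrank F Q.radical = #{i | w i = 0} := by
    rw [QuadraticForm.finrank_radical_of_equiv_weightedSumSquares h, Set.ncard_eq_toFinset_card',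
      Set.toFinset_ofPred]
  have h_total : Module.finrank F (V ⧸ Q.radical) + Module.finrank F Q.radical =
      #{i | w i = 0} + #{i | w i ≠ 0} := by
    rw [Q.radical.finrank_quotient_add_finrank, card_filter_add_card_filter_not, card_univ,
      e.toLinearEquiv.finrank_eq, Module.finrank_fintype_fun_eq_card]
  omega

theorem radical_toQuadraticMap_of_symm {R M : Type*} [CommRing R] [Invertible (2 : R)]
    [AddCommGroup M] [Module R M] {B : LinearMap.BilinForm R M} (hsymm : ∀ x y, B x y = B y x) :
    B.toQuadraticMap.radical = LinearMap.ker B := by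
  rw [QuadraticMap.radical_eq_ker_associated, QuadraticMap.associated_left_inverse R hsymm]

/-- The exponential sum of a quadratic form `Q` at an additive character `ψ`. Unlike the Weil index
it carries neither a normalizing power of `√q` nor a factor `1 / 2` in the argument of `ψ`. -/
def quadraticGaussSum {F V R : Type*} [CommRing F] [AddCommGroup V] [Module F V] [Fintype V]
    [CommRing R] (ψ : AddChar F R) (Q : QuadraticForm F V) : R :=
  ∑ x, ψ (Q x)

namespace quadraticGaussSum

section CommRing

variable {F R : Type*} [CommRing F] [CommRing R] (ψ : AddChar F R)

theorem eq_of_equivalent {V V' : Type*} [AddCommGroup V] [Module F V] [Fintype V]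
    [AddCommGroup V'] [Module F V'] [Fintype V'] {Q : QuadraticForm F V} {Q' : QuadraticForm F V'}
    (h : Q.Equivalent Q') : quadraticGaussSum ψ Q = quadraticGaussSum ψ Q' := by
  obtain ⟨e⟩ := h
  exact Fintype.sum_equiv e.toEquiv _ _ fun x ↦ congrArg ψ (e.map_app x).symm

theorem smul_eq_mulShift {V : Type*} [AddCommGroup V] [Module F V] [Fintype V] (a : F)
    (Q : QuadraticForm F V) : quadraticGaussSum ψ (a • Q) = quadraticGaussSum (ψ.mulShift a) Q :=
  rfl

theorem weightedSumSquares_eq_prod [Fintype F] {ι : Type*} [Fintype ι] [DecidableEq ι]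
    (w : ι → F) :
    quadraticGaussSum ψ (QuadraticMap.weightedSumSquares F w) = ∏ i, ∑ t, ψ (w i * t ^ 2) := by
  have map_sum (f : ι → F) : ψ (∑ i, f i) = ∏ i, ψ (f i) :=
    map_prod ψ.toMonoidHom (fun i ↦ Multiplicative.ofAdd (f i)) univ
  simp only [quadraticGaussSum, QuadraticMap.weightedSumSquares_apply, smul_eq_mul, ← sq, map_sum,
    prod_univ_sum, Fintype.piFinset_univ]

end CommRing

variable {F R : Type*} [Field F] [Fintype F] [DecidableEq F] [CommRing R] [IsDomain R]

theorem smul_weightedSumSquares (hF : ringChar F ≠ 2) {ψ : AddChar F R} (hψ : ψ ≠ 1)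
    {a : F} (ha : a ≠ 0) {ι : Type*} [Fintype ι] [DecidableEq ι] (w : ι → F) :
    quadraticGaussSum ψ (a • QuadraticMap.weightedSumSquares F w) =
      quadraticGaussSum ψ (QuadraticMap.weightedSumSquares F w) *
        (quadraticChar F a : R) ^ #{i | w i ≠ 0} := by
  have smul_eq : a • QuadraticMap.weightedSumSquares F w =
      QuadraticMap.weightedSumSquares F (a • w) := by
    ext t
    simp only [smul_apply, QuadraticMap.weightedSumSquares_apply, Pi.smul_apply,
      smul_sum, smul_assoc]
  simp only [smul_eq, weightedSumSquares_eq_prod, Pi.smul_apply, smul_eq_mul,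
    sum_addChar_mul_mul_sq hF hψ ha, prod_mul_distrib, ← prod_filter, prod_const]

theorem smul (hF : ringChar F ≠ 2) {ψ : AddChar F R} (hψ : ψ ≠ 1) {a : F} (ha : a ≠ 0)
    {V : Type*} [AddCommGroup V] [Module F V] [Fintype V] (Q : QuadraticForm F V) :
    quadraticGaussSum ψ (a • Q) =
      quadraticGaussSum ψ Q * (quadraticChar F a : R) ^ Module.finrank F (V ⧸ Q.radical) := by
  have : NeZero (2 : F) := ⟨Ring.two_ne_zero hF⟩
  have : Invertible (2 : F) := invertibleOfNonzero two_ne_zero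
  obtain ⟨w, hw⟩ := Q.equivalent_weightedSumSquares
  rw [smul_eq_mulShift, eq_of_equivalent _ hw, ← smul_eq_mulShift,
    smul_weightedSumSquares hF hψ ha, eq_of_equivalent ψ hw,
    finrank_quotient_radical_of_equivalent_weightedSumSquares hw]

end quadraticGaussSum

theorem weilIndex_eq_quadraticGaussSum {F V : Type*} [Field F] [Fintype F]
    [AddCommGroup V] [Module F V] [Fintype V] (ψ : AddChar F ℂ) (Q : LinearMap.BilinForm F V) :
    weilIndex ψ Q = ((Real.sqrt (Fintype.card F) : ℂ))⁻¹ ^ Module.finrank F V *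
      quadraticGaussSum (ψ.mulShift 2⁻¹) Q.toQuadraticMap := by
  simp only [weilIndex, quadraticGaussSum, AddChar.mulShift_apply,
    LinearMap.BilinMap.toQuadraticMap_apply, div_eq_inv_mul]

theorem weilIndex_smul_general {F V : Type*} [Field F] [Fintype F] [DecidableEq F]
    [AddCommGroup V] [Module F V] [Fintype V]
    (hq : Odd (Fintype.card F))
    (ψ : AddChar F ℂ) (hψ : ψ ≠ 1)
    (Q : LinearMap.BilinForm F V)
    (hsymm : ∀ x y : V, Q x y = Q y x)
    (a : F) (ha : a ≠ 0) :
    weilIndex ψ (a • Q) =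
      weilIndex ψ Q * ((quadraticChar F a : ℤ) : ℂ) ^ Module.finrank F (LinearMap.range Q) := by
  have hF : ringChar F ≠ 2 := fun h ↦
    Nat.not_even_iff_odd.mpr hq (Nat.even_iff.mpr (FiniteField.even_card_of_char_two h))
  have h2 : (2 : F) ≠ 0 := Ring.two_ne_zero hF
  have : Invertible (2 : F) := invertibleOfNonzero h2
  have hψ_half : ψ.mulShift 2⁻¹ ≠ 1 := AddChar.IsPrimitive.of_ne_one hψ (inv_ne_zero h2)
  have h_rank : Module.finrank F (V ⧸ Q.toQuadraticMap.radical) =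
      Module.finrank F (LinearMap.range Q) := by
    rw [radical_toQuadraticMap_of_symm hsymm, Q.quotKerEquivRange.finrank_eq]
  rw [weilIndex_eq_quadraticGaussSum, weilIndex_eq_quadraticGaussSum,
    LinearMap.BilinMap.toQuadraticMap_smul, quadraticGaussSum.smul hF hψ_half ha, h_rank, mul_assoc]

/-- Rescaling the bilinear form by `a ∈ F^×` changes the Weil index by `χ(a)^{dim V}`,
where `χ` is the quadratic character of `F`. -/
theorem weilIndex_smul {F V : Type*} [Field F] [Fintype F] [DecidableEq F]
    [AddCommGroup V] [Module F V] [Fintype V]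
    (hq : Odd (Fintype.card F))
    (ψ : AddChar F ℂ) (hψ : ψ ≠ 1)
    (Q : LinearMap.BilinForm F V)
    (hsymm : ∀ x y : V, Q x y = Q y x)
    (hnd : LinearMap.BilinForm.Nondegenerate Q)
    (a : F) (ha : a ≠ 0) :
    weilIndex ψ (a • Q) =
      weilIndex ψ Q * ((quadraticChar F a : ℤ) : ℂ) ^ Module.finrank F V := by
  rw [weilIndex_smul_general hq ψ hψ Q hsymm a ha,
    LinearMap.finrank_range_of_inj (LinearMap.ker_eq_bot.mp hnd.ker_eq_bot)]
end

section
/- Let F be a finite field of cardinality q and characteristic p > 3, and ψ : F → ℂ a nontrivial additive character. Let Q_{E₆}(x) = ∑_{i=1}^{6} x_i² − (x₁x₃ + x₃x₄ + x₄x₅ + x₅x₆ + x₂x₄) (half the quadratic form of the Cartan matrix of type E₆ in Bourbaki numbering). Then q^{-3} ∑_{x ∈ F⁶} ψ(Q_{E₆}(x)) = χ₃(q), where χ₃ is the quadratic character of ZMod 3 evaluated at q mod 3 (the Legendre symbol (q/3)). (This is the Weil index γ(E₆) = (q/3).) -/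
open Finset

/-!
Over `ℤ[1/3]` the lattice `E₆` coincides with its sublattice `A₂³`, read off the extended Dynkin
diagram by deleting the trivalent node. Hence the sum over `F⁶` is the cube of
`∑ ψ (x² - x y + y²)`, where `x² - x y + y²` is the norm form of `F[ω]` with `ω² = -1 - ω`.

A norm form `N` with nonzero discriminant is multiplicative and represents every element of `F`, so
all its fibres over `c ≠ 0` have the same size `k`, and `∑ ψ (N z) = #N⁻¹(0) - k`. If the defining
polynomial of `ω` has `r` roots in `F`, then `#N⁻¹(0) = 1 + (q - 1) r`, and counting all `q²`
elements gives `k = q + 1 - r`; the sum is therefore `q (r - 1)`. For `X² + X + 1` the roots are the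
primitive cube roots of unity, and `r - 1 = (q/3)`. The argument is uniform in the characteristic,
`2` included.
-/

section Fibers

variable {X A R : Type*} [Fintype X] [Fintype A] [DecidableEq A] [Zero A] [CommRing R]

theorem sum_comp_of_card_fiber_eq {N : X → A} {k : ℕ}
    (hk : ∀ c ≠ 0, #{x | N x = c} = k) (f : A → R) :
    ∑ x, f (N x) = (#{x | N x = 0} - k : R) * f 0 + k * ∑ c, f c := by
  have hsingle : ∑ c, (#{x | N x = c} - k : R) * f c = (#{x | N x = 0} - k : R) * f 0 :=
    Fintype.sum_eq_single 0 fun c hc => by rw [hk c hc, sub_self, zero_mul]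
  rw [← sum_fiberwise' univ N f, ← hsingle, mul_sum, ← sum_add_distrib]
  simp only [sum_const, nsmul_eq_mul, sub_mul, sub_add_cancel]

end Fibers

section Norm

instance {R : Type*} [Fintype R] (a b : R) : Fintype (QuadraticAlgebra R a b) :=
  Fintype.ofEquiv _ (QuadraticAlgebra.equivProd a b).symm

theorem card_quadraticAlgebra {R : Type*} [Fintype R] (a b : R) :
    Fintype.card (QuadraticAlgebra R a b) = Fintype.card R ^ 2 := by
  rw [Fintype.card_congr (QuadraticAlgebra.equivProd a b), Fintype.card_prod, sq]

variable {F : Type*} [Field F] {a b : F}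

theorem norm_eq_im_sq_mul {z : QuadraticAlgebra F a b} (hz : z.im ≠ 0) :
    z.norm = z.im ^ 2 * ((-z.re / z.im) ^ 2 - (b * (-z.re / z.im) + a)) := by
  rw [QuadraticAlgebra.norm_def]
  field_simp
  ring

theorem im_ne_zero_of_norm_eq_zero {z : QuadraticAlgebra F a b} (hz : z ≠ 0) (hN : z.norm = 0) :
    z.im ≠ 0 := by
  contrapose! hz
  exact QuadraticAlgebra.ext (by simpa [QuadraticAlgebra.norm_def, hz] using hN) hz

theorem norm_surjective_of_disc_ne_zero [Finite F] (h : b ^ 2 + 4 * a ≠ 0) :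
    Function.Surjective (QuadraticAlgebra.norm : QuadraticAlgebra F a b → F) := by
  have := Fintype.ofFinite F
  intro c
  by_cases hF : ringChar F = 2
  · obtain ⟨r, rfl⟩ := FiniteField.isSquare_of_char_two hF c
    exact ⟨⟨r, 0⟩, by simp [QuadraticAlgebra.norm_def]⟩
  · -- Completing the square turns the norm form into `x² - ((b / 2)² + a) y²`.
    have h2 : (2 : F) ≠ 0 := Ring.two_ne_zero hF
    have hd : -((b / 2) ^ 2 + a) ≠ 0 := by
      contrapose! h
      field_simp at h
      linear_combination -h
    obtain ⟨x, y, hxy⟩ := FiniteField.exists_root_sum_quadratic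
      (Polynomial.degree_X_pow_sub_C two_pos c)
      (Polynomial.degree_C_mul_X_pow 2 hd) (FiniteField.odd_card_of_char_ne_two hF)
    simp only [Polynomial.eval_sub, Polynomial.eval_pow, Polynomial.eval_X, Polynomial.eval_C,
      Polynomial.eval_mul] at hxy
    refine ⟨⟨x - b / 2 * y, y⟩, ?_⟩
    rw [QuadraticAlgebra.norm_def]
    field_simp at hxy ⊢
    linear_combination hxy

variable [Fintype F] [DecidableEq F]

theorem card_norm_eq_card_norm_eq_one (h : b ^ 2 + 4 * a ≠ 0) {c : F} (hc : c ≠ 0) :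
    #{z : QuadraticAlgebra F a b | z.norm = c} = #{z : QuadraticAlgebra F a b | z.norm = 1} := by
  obtain ⟨w, rfl⟩ := norm_surjective_of_disc_ne_zero h c
  obtain ⟨u, rfl⟩ := QuadraticAlgebra.isUnit_iff_norm_isUnit.2 hc.isUnit
  refine (card_equiv u.mulLeft fun z => ?_).symm
  simp [hc]

theorem card_norm_eq_zero (a b : F) :
    #{z : QuadraticAlgebra F a b | z.norm = 0} =
      1 + (Fintype.card F - 1) * #{t : F | t ^ 2 = b * t + a} := by
  have h0 : (0 : QuadraticAlgebra F a b) ∈ ({z | z.norm = 0} : Finset _) := by simp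
  rw [← card_erase_add_one h0, add_comm, ← card_univ, ← card_erase_of_mem (mem_univ (0 : F)),
    ← card_product]
  congr 1
  refine card_nbij' (fun z => (z.im, -z.re / z.im)) (fun p => ⟨-(p.2 * p.1), p.1⟩) ?_ ?_ ?_ ?_
  · intro z hz
    obtain ⟨hN, hz⟩ : z.norm = 0 ∧ z ≠ 0 := by simpa using hz
    have him := im_ne_zero_of_norm_eq_zero hz hN
    simpa [him, norm_eq_im_sq_mul, sub_eq_zero] using hN
  · rintro ⟨y, t⟩ hyt
    obtain ⟨hy, ht⟩ : y ≠ 0 ∧ t ^ 2 = b * t + a := by simpa using hyt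
    simp [hy, norm_eq_im_sq_mul, QuadraticAlgebra.ext_iff, ht]
  · intro z hz
    obtain ⟨hN, hz⟩ : z.norm = 0 ∧ z ≠ 0 := by simpa using hz
    simp [im_ne_zero_of_norm_eq_zero hz hN]
  · rintro ⟨y, t⟩ hyt
    obtain ⟨hy, -⟩ : y ≠ 0 ∧ t ^ 2 = b * t + a := by simpa using hyt
    simp [hy]

theorem card_norm_eq_one (h : b ^ 2 + 4 * a ≠ 0) :
    (#{z : QuadraticAlgebra F a b | z.norm = 1} : ℤ) =
      Fintype.card F + 1 - #{t : F | t ^ 2 = b * t + a} := by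
  have hq : (Fintype.card F - 1 : ℤ) ≠ 0 :=
    sub_ne_zero.2 (mod_cast Fintype.one_lt_card.ne')
  have hcount := sum_comp_of_card_fiber_eq
    (fun _ => card_norm_eq_card_norm_eq_one h) (fun _ : F => (1 : ℤ))
  simp only [sum_const, card_univ, card_quadraticAlgebra, card_norm_eq_zero, nsmul_eq_mul,
    mul_one] at hcount
  push_cast [Nat.cast_sub (Fintype.card_pos (α := F))] at hcount
  apply mul_left_cancel₀ hq
  linear_combination -hcount

theorem sum_addChar_norm {R : Type*} [CommRing R] [IsDomain R] {ψ : AddChar F R} (hψ : ψ ≠ 1)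
    (h : b ^ 2 + 4 * a ≠ 0) :
    ∑ z : QuadraticAlgebra F a b, ψ z.norm =
      Fintype.card F * (#{t : F | t ^ 2 = b * t + a} - 1) := by
  have hone : (#{z : QuadraticAlgebra F a b | z.norm = 1} : R) =
      Fintype.card F + 1 - #{t : F | t ^ 2 = b * t + a} := mod_cast
    congrArg (Int.cast : ℤ → R) (card_norm_eq_one h)
  rw [sum_comp_of_card_fiber_eq (fun _ => card_norm_eq_card_norm_eq_one h) ψ,
    AddChar.sum_eq_zero_of_ne_one hψ, AddChar.map_zero_eq_one, hone, card_norm_eq_zero]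
  push_cast [Nat.cast_sub (Fintype.card_pos (α := F))]
  ring

end Norm

section CubeRoots

variable {F : Type*} [Field F] [Fintype F]

theorem exists_isPrimitiveRoot_iff_dvd_card_sub_one {k : ℕ} (hk : k ≠ 0) :
    (∃ ζ : F, IsPrimitiveRoot ζ k) ↔ k ∣ Fintype.card F - 1 := by
  constructor
  · rintro ⟨ζ, hζ⟩
    exact hζ.dvd_of_pow_eq_one _ (FiniteField.pow_card_sub_one_eq_one ζ (hζ.ne_zero hk))
  · rintro ⟨m, hm⟩
    obtain ⟨g, hg⟩ := IsCyclic.exists_ofOrder_eq_natCard (α := Fˣ)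
    rw [Nat.card_units, Nat.card_eq_fintype_card] at hg
    refine ⟨(g ^ m : Fˣ), IsPrimitiveRoot.coe_units_iff.2
      ((IsPrimitiveRoot.orderOf g).pow (orderOf_pos g) ?_)⟩
    rw [hg, hm, mul_comm]

theorem card_primitiveRoots_eq_ite {k : ℕ} (hk : k ≠ 0) :
    #(primitiveRoots k F) = if k ∣ Fintype.card F - 1 then k.totient else 0 := by
  split_ifs with h
  · obtain ⟨ζ, hζ⟩ := (exists_isPrimitiveRoot_iff_dvd_card_sub_one hk).2 h
    exact hζ.card_primitiveRoots
  · rw [card_eq_zero, eq_empty_iff_forall_notMem]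
    exact fun ζ hζ => h <| (exists_isPrimitiveRoot_iff_dvd_card_sub_one hk).1
      ⟨ζ, isPrimitiveRoot_of_mem_primitiveRoots hζ⟩

theorem filter_sq_eq_neg_sub_one_eq_primitiveRoots [DecidableEq F] (h3 : (3 : F) ≠ 0) :
    ({t | t ^ 2 = -1 * t + -1} : Finset F) = primitiveRoots 3 F := by
  have : NeZero ((3 : ℕ) : F) := ⟨mod_cast h3⟩
  ext t
  rw [mem_filter_univ, mem_primitiveRoots three_pos, ← Polynomial.isRoot_cyclotomic_iff,
    Polynomial.cyclotomic_three]
  simp only [Polynomial.IsRoot.def, Polynomial.eval_add, Polynomial.eval_pow, Polynomial.eval_X,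
    Polynomial.eval_one]
  constructor <;> intro h <;> linear_combination h

theorem not_dvd_card_of_natCast_ne_zero {p : ℕ} [Fact p.Prime] (hp : (p : F) ≠ 0) :
    ¬p ∣ Fintype.card F := by
  rw [← prime_dvd_char_iff_dvd_card, ← isUnit_iff_not_dvd_char]
  exact hp.isUnit

theorem card_primitiveRoots_three (h3 : (3 : F) ≠ 0) :
    (#(primitiveRoots 3 F) : ℤ) = quadraticChar (ZMod 3) (Fintype.card F) + 1 := by
  have hdvd : ¬3 ∣ Fintype.card F := not_dvd_card_of_natCast_ne_zero (mod_cast h3)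
  rw [card_primitiveRoots_eq_ite three_ne_zero, ← ZMod.natCast_mod]
  obtain hq | hq : Fintype.card F % 3 = 1 ∨ Fintype.card F % 3 = 2 := by omega
  · rw [if_pos (by omega), hq]
    decide
  · rw [if_neg (by omega), hq]
    decide

end CubeRoots

section E6

/-- Half the quadratic form of the Cartan matrix of type `E₆`. The Bourbaki node `i` is the
coordinate `i - 1`. -/
def e6Form {R : Type*} [CommRing R] (x : Fin 6 → R) : R :=
  (∑ i, x i ^ 2) - (x 0 * x 2 + x 2 * x 3 + x 3 * x 4 + x 4 * x 5 + x 1 * x 3)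

/-- The identification `A₂³ ≃ E₆` away from `3`, each `A₂` being `F[ω]` with `ω² = -1 - ω`. The
bases `(1, ω)` of the three copies go to `(α₁, α₃)`, `(α₆, α₅)` and `(α₂, α₀)`, where
`α₀ = -(α₁ + 2 α₂ + 2 α₃ + 3 α₄ + 2 α₅ + α₆)` is the extending node. -/
def a2CubeEquivE6 {F : Type*} [Field F] (h3 : (3 : F) ≠ 0) :
    (Fin 3 → QuadraticAlgebra F (-1) (-1)) ≃ (Fin 6 → F) where
  toFun z := ![(z 0).re - (z 2).im, (z 2).re - 2 * (z 2).im, (z 0).im - 2 * (z 2).im,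
    -3 * (z 2).im, (z 1).im - 2 * (z 2).im, (z 1).re - (z 2).im]
  invFun x := ![⟨x 0 - x 3 / 3, x 2 - 2 * (x 3 / 3)⟩, ⟨x 5 - x 3 / 3, x 4 - 2 * (x 3 / 3)⟩,
    ⟨x 1 - 2 * (x 3 / 3), -(x 3 / 3)⟩]
  left_inv z := by
    ext i <;> fin_cases i <;> simp <;> field_simp <;> ring
  right_inv x := by
    ext i
    fin_cases i <;> simp [mul_div_cancel₀, h3]

theorem e6Form_a2CubeEquivE6 {F : Type*} [Field F] (h3 : (3 : F) ≠ 0)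
    (z : Fin 3 → QuadraticAlgebra F (-1) (-1)) :
    e6Form (a2CubeEquivE6 h3 z) = ∑ i, (z i).norm := by
  simp only [e6Form, a2CubeEquivE6, Equiv.coe_fn_mk, Fin.sum_univ_six, Fin.sum_univ_three,
    Matrix.cons_val, QuadraticAlgebra.norm_def]
  ring

variable {F R : Type*} [Field F] [Fintype F] [CommRing R]

theorem sum_addChar_e6Form (h3 : (3 : F) ≠ 0) (ψ : AddChar F R) :
    ∑ x, ψ (e6Form x) = (∑ z : QuadraticAlgebra F (-1) (-1), ψ z.norm) ^ 3 := by
  rw [← (a2CubeEquivE6 h3).sum_comp, Fintype.sum_pow]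
  simp only [e6Form_a2CubeEquivE6, Fin.sum_univ_three, Fin.prod_univ_three, AddChar.map_add_eq_mul]

theorem weilIndex_E6_general [IsDomain R] (h3 : (3 : F) ≠ 0) {ψ : AddChar F R} (hψ : ψ ≠ 1) :
    ∑ x, ψ (e6Form x) =
      (Fintype.card F : R) ^ 3 * (quadraticChar (ZMod 3) (Fintype.card F) : ℤ) := by
  classical
  have hdisc : (-1 : F) ^ 2 + 4 * -1 ≠ 0 := by
    rw [show (-1 : F) ^ 2 + 4 * -1 = -3 by norm_num]
    exact neg_ne_zero.2 h3
  have hroots : (#(primitiveRoots 3 F) : R) =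
      (quadraticChar (ZMod 3) (Fintype.card F) : ℤ) + 1 :=
    mod_cast congrArg (Int.cast : ℤ → R) (card_primitiveRoots_three h3)
  have hcube : quadraticChar (ZMod 3) (Fintype.card F) ^ 3 =
      quadraticChar (ZMod 3) (Fintype.card F) := by
    rw [← MulChar.pow_apply' _ three_ne_zero,
      (quadraticChar_isQuadratic (ZMod 3)).pow_odd (by decide)]
  rw [sum_addChar_e6Form h3, sum_addChar_norm hψ hdisc,
    filter_sq_eq_neg_sub_one_eq_primitiveRoots h3, hroots, add_sub_cancel_right, mul_pow,
    ← Int.cast_pow, hcube]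

end E6

/-- The Weil index of type `E₆`: `q⁻³ ∑_{x ∈ F⁶} ψ(Q_{E₆}(x)) = (q/3)`, where `Q_{E₆}` is half
the quadratic form of the Cartan matrix of type `E₆` (Bourbaki numbering) and `(q/3)` is the
Legendre symbol of `q` modulo `3`. -/
theorem weilIndex_E6 {F : Type*} [Field F] [Fintype F]
    (hp : 3 < ringChar F)
    (ψ : AddChar F ℂ) (hψ : ψ ≠ 1) :
    ((Fintype.card F : ℂ) ^ 3)⁻¹ *
        ∑ x : Fin 6 → F,
          ψ ((∑ i, x i ^ 2) -
              (x 0 * x 2 + x 2 * x 3 + x 3 * x 4 + x 4 * x 5 + x 1 * x 3)) =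
      ((quadraticChar (ZMod 3) (Fintype.card F : ZMod 3) : ℤ) : ℂ) := by
  have h3 : ((3 : ℕ) : F) ≠ 0 := fun h =>
    hp.not_ge (Nat.le_of_dvd three_pos ((ringChar.spec F 3).1 h))
  rw [inv_mul_eq_iff_eq_mul₀ (pow_ne_zero 3 (Nat.cast_ne_zero.2 Fintype.card_ne_zero))]
  exact weilIndex_E6_general (mod_cast h3) hψ
end

section
/- Let F be a finite field of odd cardinality q and ψ : F → ℂ a nontrivial additive character. Let Q_{E₇}(x) = ∑_{i=1}^{7} x_i² − (x₁x₃ + x₃x₄ + x₄x₅ + x₅x₆ + x₆x₇ + x₂x₄) (half the quadratic form of the Cartan matrix of type E₇ in Bourbaki numbering). Then (∑_{x ∈ F⁷} ψ(Q_{E₇}(x))) · (∑_{t ∈ F} ψ(t²)) = q⁴. (Equivalently, the Weil index γ(E₇) equals ε(ψ)^{−1}, where ε(ψ) = q^{-1/2} ∑_{t ∈ F} ψ(t²).) -/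
open Finset

/-!
Let `G = ∑ t, ψ (t ^ 2)`. The root system `E₇` contains seven mutually orthogonal roots. Once `2`
is invertible they form a basis, in which the form becomes a sum of seven squares, so that the `E₇`
sum is `G ^ 7` and the claim reads `G ^ 8 = q ^ 4`.

Let `G'` be the sum `G` for `ψ⁻¹`. Factoring `s ^ 2 - t ^ 2` gives `G * G' = q`. Moreover, if
`a ^ 2 + b ^ 2 = -1`, then multiplication by `a + bi` carries `x ^ 2 + y ^ 2` to its negative, so
`G ^ 2 = G' ^ 2`. Hence `G ^ 4 = G ^ 2 * G' ^ 2 = q ^ 2`.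
-/

theorem exists_dvd_sq_add_sq_add_one {n : ℕ} (hn : Odd n) :
    ∃ a b : ℕ, n ∣ a ^ 2 + b ^ 2 + 1 := by
  -- For odd `n`, a prime congruent to `2 * n - 1` modulo `4 * n` is `1` modulo `4`, hence a sum of
  -- two squares, and `-1` modulo `n`.
  have hcop : IsCoprime (2 * n - 1 : ℤ) (4 * n : ℕ) := ⟨2 * n - 1, 1 - n, by push_cast; ring⟩
  obtain ⟨p, -, hp, hpmod⟩ :=
    Nat.forall_exists_prime_gt_and_zmodEq 0 (mul_ne_zero four_ne_zero hn.pos.ne') hcop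
  have : Fact p.Prime := ⟨hp⟩
  push_cast at hpmod
  have hp4 : p % 4 = 1 := by
    have hmod : (p : ℤ) ≡ 2 * n - 1 [ZMOD 4] := hpmod.of_mul_right n
    obtain ⟨k, rfl⟩ := hn
    rw [Int.ModEq] at hmod
    lia
  obtain ⟨a, b, hab⟩ := Nat.Prime.sq_add_sq (p := p) (by lia)
  have hpn : (p + 1 : ℤ) ≡ 0 [ZMOD n] :=
    calc (p + 1 : ℤ) ≡ 2 * n - 1 + 1 [ZMOD n] := (hpmod.of_mul_left 4).add_right 1
      _ ≡ 0 [ZMOD n] := Int.modEq_zero_iff_dvd.mpr ⟨2, by ring⟩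
  refine ⟨a, b, ?_⟩
  rw [hab]
  exact_mod_cast Int.modEq_zero_iff_dvd.mp hpn

theorem exists_sq_add_sq_eq_neg_one {K : Type*} [Ring K] [Fintype K]
    (hK : Odd (Fintype.card K)) : ∃ a b : K, a ^ 2 + b ^ 2 = -1 := by
  obtain ⟨a, b, c, hc⟩ := exists_dvd_sq_add_sq_add_one hK
  refine ⟨a, b, eq_neg_of_add_eq_zero_left ?_⟩
  exact_mod_cast (congrArg (Nat.cast : ℕ → K) hc).trans (by simp)

theorem isUnit_two_of_odd_card {K : Type*} [Ring K] [Fintype K] (hK : Odd (Fintype.card K)) :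
    IsUnit (2 : K) := by
  obtain ⟨k, hk⟩ := hK
  have hcard : (2 * k + 1 : K) = 0 := by
    exact_mod_cast hk ▸ Nat.cast_card_eq_zero K
  exact .of_mul_eq_one (-k : K) (by rw [mul_neg, neg_eq_iff_add_eq_zero, hcard])

theorem addChar_sum_eq_prod {ι A M : Type*} [AddCommMonoid A] [CommMonoid M] (ψ : AddChar A M)
    (s : Finset ι) (f : ι → A) : ψ (∑ i ∈ s, f i) = ∏ i ∈ s, ψ (f i) :=
  map_prod ψ.toMonoidHom (fun i => Multiplicative.ofAdd (f i)) s

section Diagonalization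

variable {ι R : Type*} [Fintype ι] [DecidableEq ι] [CommSemiring R]

theorem sum_addChar_sum_comp {α A : Type*} [Fintype α] [AddCommMonoid A] (ψ : AddChar A R)
    (f : α → A) :
    ∑ x : ι → α, ψ (∑ i, f (x i)) = (∑ t, ψ (f t)) ^ Fintype.card ι := by
  simp only [addChar_sum_eq_prod, ← Fintype.prod_sum fun (_ : ι) t => ψ (f t), prod_const,
    card_univ]

open Matrix in
theorem sum_addChar_eq_pow_of_transpose_mul_mul {K : Type*} [CommRing K] [Fintype K]
    (h2 : IsUnit (2 : K)) (ψ : AddChar K R) {Q : (ι → K) → K} {C B : Matrix ι ι K}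
    (hQ : ∀ x, 2 * Q x = x ⬝ᵥ C *ᵥ x) (hB : Bᵀ * C * B = (2 : K) • 1) :
    ∑ x, ψ (Q x) = (∑ t : K, ψ (t ^ 2)) ^ Fintype.card ι := by
  have hBunit : IsUnit B := by
    obtain ⟨u, hu⟩ := h2
    refine IsUnit.of_mul_eq_one_right (u⁻¹ • (Bᵀ * C)) ?_
    rw [smul_mul_assoc, hB, ← hu, ← Units.smul_def, inv_smul_smul]
  have hQB (y : ι → K) : Q (B *ᵥ y) = ∑ i, y i ^ 2 := by
    apply h2.mul_left_cancel
    calc 2 * Q (B *ᵥ y) = y ⬝ᵥ (Bᵀ * C * B) *ᵥ y := by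
          rw [hQ, ← vecMul_transpose, ← dotProduct_mulVec, vecMul_transpose, mulVec_mulVec,
            mulVec_mulVec, mul_assoc]
      _ = 2 * ∑ i, y i ^ 2 := by
          rw [hB, smul_mulVec, one_mulVec, dotProduct_smul, smul_eq_mul]
          simp only [dotProduct, sq]
  have hbij : Function.Bijective B.mulVec :=
    Finite.injective_iff_bijective.mp (mulVec_injective_of_isUnit hBunit)
  calc ∑ x, ψ (Q x) = ∑ y, ψ (Q (B *ᵥ y)) := (hbij.sum_comp fun x => ψ (Q x)).symm
    _ = ∑ y : ι → K, ψ (∑ i, y i ^ 2) := by simp only [hQB]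
    _ = (∑ t : K, ψ (t ^ 2)) ^ Fintype.card ι := sum_addChar_sum_comp ψ (· ^ 2)

end Diagonalization

section SumOverSquares

variable {K R : Type*} [CommRing K] [Fintype K]

theorem sum_addChar_sq_mul_sum_inv [CommRing R] [IsDomain R] (h2 : IsUnit (2 : K)) {ψ : AddChar K R}
    (hψ : ψ.IsPrimitive) :
    (∑ t : K, ψ (t ^ 2)) * ∑ t : K, ψ⁻¹ (t ^ 2) = Fintype.card K := by
  classical
  calc (∑ s : K, ψ (s ^ 2)) * ∑ t : K, ψ⁻¹ (t ^ 2)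
      = ∑ t : K, ∑ s : K, ψ (s ^ 2 - t ^ 2) := by
        simp only [sum_mul_sum, AddChar.inv_apply, ← AddChar.map_add_eq_mul, ← sub_eq_add_neg]
        exact sum_comm
    _ = ∑ t : K, ∑ u : K, ψ ((u + t) ^ 2 - t ^ 2) := by
        refine sum_congr rfl fun t _ => ?_
        exact (Equiv.sum_comp (Equiv.addRight t) fun s => ψ (s ^ 2 - t ^ 2)).symm
    _ = ∑ u : K, ψ (u ^ 2) * ∑ t : K, ψ (t * (2 * u)) := by
        rw [sum_comm]
        simp only [mul_sum, ← AddChar.map_add_eq_mul]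
        refine sum_congr rfl fun u _ => sum_congr rfl fun t _ => congrArg ψ ?_
        ring
    _ = Fintype.card K := by
        simp [AddChar.sum_mulShift _ hψ, h2.mul_right_eq_zero]

open Matrix in
theorem sq_sum_inv_addChar_sq [CommSemiring R] (h2 : IsUnit (2 : K))
    (hneg : ∃ a b : K, a ^ 2 + b ^ 2 = -1) (ψ : AddChar K R) :
    (∑ t : K, ψ⁻¹ (t ^ 2)) ^ 2 = (∑ t : K, ψ (t ^ 2)) ^ 2 := by
  obtain ⟨a, b, hab⟩ := hneg
  have hform (x : Fin 2 → K) : 2 * -∑ i, x i ^ 2 = x ⬝ᵥ ((-2 : K) • (1 : Matrix _ _ K)) *ᵥ x := by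
    simp only [dotProduct, smul_mulVec, one_mulVec, Fin.sum_univ_two, Pi.smul_apply, smul_eq_mul]
    ring
  have hrot : !![a, -b; b, a]ᵀ * ((-2 : K) • (1 : Matrix _ _ K)) * !![a, -b; b, a] =
      (2 : K) • 1 := by
    ext i j
    fin_cases i <;> fin_cases j <;> simp [Matrix.mul_apply, Fin.sum_univ_two] <;> grind
  calc (∑ t : K, ψ⁻¹ (t ^ 2)) ^ 2 = ∑ x : Fin 2 → K, ψ (-∑ i, x i ^ 2) := by
        simpa only [Fintype.card_fin, AddChar.inv_apply] using
          (sum_addChar_sum_comp (ι := Fin 2) ψ⁻¹ fun t : K => t ^ 2).symm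
    _ = (∑ t : K, ψ (t ^ 2)) ^ 2 := by
        simpa only [Fintype.card_fin] using
          sum_addChar_eq_pow_of_transpose_mul_mul h2 ψ hform hrot

theorem sum_addChar_sq_pow_four [CommRing R] [IsDomain R] (hK : Odd (Fintype.card K))
    {ψ : AddChar K R} (hψ : ψ.IsPrimitive) :
    (∑ t : K, ψ (t ^ 2)) ^ 4 = (Fintype.card K : R) ^ 2 := by
  have h2 := isUnit_two_of_odd_card hK
  rw [← sum_addChar_sq_mul_sum_inv h2 hψ, mul_pow,
    sq_sum_inv_addChar_sq h2 (exists_sq_add_sq_eq_neg_one hK) ψ, ← pow_add]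

end SumOverSquares

section E7

/-- Half the quadratic form of the Cartan matrix `E₇`, with the Bourbaki index `i` written `i - 1`;
it is spelled out so as to make sense where `2` is not invertible. -/
def e7Form {K : Type*} [CommRing K] (x : Fin 7 → K) : K :=
  (∑ i, x i ^ 2) - (x 0 * x 2 + x 2 * x 3 + x 3 * x 4 + x 4 * x 5 + x 5 * x 6 + x 1 * x 3)

/-- Seven mutually orthogonal roots of `E₇`, as columns of coordinates in the basis of simple
roots: `α₇`, `α₅`, `α₃`, `α₂`, then the highest roots of the subsystems `D₄`, `D₆`, `E₇`. -/
def e7OrthogonalRoots : Matrix (Fin 7) (Fin 7) ℤ :=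
  !![0, 0, 0, 0, 0, 0, 2;
     0, 0, 0, 1, 1, 1, 2;
     0, 0, 1, 0, 1, 1, 3;
     0, 0, 0, 0, 2, 2, 4;
     0, 1, 0, 0, 1, 2, 3;
     0, 0, 0, 0, 0, 2, 2;
     1, 0, 0, 0, 0, 1, 1]

open Matrix

theorem e7OrthogonalRoots_transpose_mul_mul :
    e7OrthogonalRootsᵀ * CartanMatrix.E₇ * e7OrthogonalRoots = (2 : ℤ) • 1 := by
  decide

theorem two_mul_e7Form {K : Type*} [CommRing K] (x : Fin 7 → K) :
    2 * e7Form x = x ⬝ᵥ (CartanMatrix.E₇.map (Int.castRingHom K)) *ᵥ x := by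
  simp only [e7Form, CartanMatrix.E₇, dotProduct, mulVec, Fin.sum_univ_seven, map_apply, of_apply,
    Matrix.cons_val, eq_intCast, Int.cast_neg, Int.cast_ofNat, Int.cast_one, Int.cast_zero]
  ring

theorem sum_addChar_e7Form {K R : Type*} [CommRing K] [Fintype K] [CommSemiring R]
    (h2 : IsUnit (2 : K)) (ψ : AddChar K R) :
    ∑ x, ψ (e7Form x) = (∑ t : K, ψ (t ^ 2)) ^ 7 := by
  have hroots : (e7OrthogonalRoots.map (Int.castRingHom K))ᵀ *
      CartanMatrix.E₇.map (Int.castRingHom K) * e7OrthogonalRoots.map (Int.castRingHom K) =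
        (2 : K) • 1 := by
    rw [← transpose_map, ← Matrix.map_mul, ← Matrix.map_mul, e7OrthogonalRoots_transpose_mul_mul]
    ext i j
    simp only [map_apply, Matrix.smul_apply, one_apply]
    split_ifs <;> simp
  simpa only [Fintype.card_fin] using
    sum_addChar_eq_pow_of_transpose_mul_mul h2 ψ two_mul_e7Form hroots

end E7

theorem weilIndex_E7_general {K R : Type*} [CommRing K] [Fintype K] [CommRing R] [IsDomain R]
    (hK : Odd (Fintype.card K)) {ψ : AddChar K R} (hψ : ψ.IsPrimitive) :
    (∑ x, ψ (e7Form x)) * ∑ t : K, ψ (t ^ 2) = (Fintype.card K : R) ^ 4 := by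
  calc (∑ x, ψ (e7Form x)) * ∑ t : K, ψ (t ^ 2)
      = ((∑ t : K, ψ (t ^ 2)) ^ 4) ^ 2 := by
        rw [sum_addChar_e7Form (isUnit_two_of_odd_card hK) ψ]
        ring
    _ = (Fintype.card K : R) ^ 4 := by
        rw [sum_addChar_sq_pow_four hK hψ, ← pow_mul]

/-- The Weil index of type `E₇` equals `ε(ψ)⁻¹`:
`(∑_{x ∈ F⁷} ψ(Q_{E₇}(x))) · (∑_{t ∈ F} ψ(t²)) = q⁴`, where `Q_{E₇}` is half the quadratic
form of the Cartan matrix of type `E₇` (Bourbaki numbering). -/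
theorem weilIndex_E7 {F : Type*} [Field F] [Fintype F]
    (hq : Odd (Fintype.card F))
    (ψ : AddChar F ℂ) (hψ : ψ ≠ 1) :
    (∑ x : Fin 7 → F,
          ψ ((∑ i, x i ^ 2) -
              (x 0 * x 2 + x 2 * x 3 + x 3 * x 4 + x 4 * x 5 + x 5 * x 6 + x 1 * x 3))) *
        (∑ t : F, ψ (t ^ 2)) =
      (Fintype.card F : ℂ) ^ 4 :=
  weilIndex_E7_general hq (.of_ne_one hψ)
end
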